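/- Let (g_n) be a sequence in G = PSL(2,ℂ) with g_n → e and g_n ∉ VH = {vh : v ∈ V, h ∈ H} for all n. Then limsup_n U g_n H = limsup_n {u g_n h : u ∈ U, h ∈ H} contains a one-parameter semigroup of V. -/

import Mathlib

open scoped MatrixGroups
open Matrix Filter

noncomputable section

/-- `SL(2,ℂ)`. -/
abbrev SL2C := Matrix.SpecialLinearGroup (Fin 2) ℂ

instance : TopologicalSpace SL2C := instTopologicalSpaceSubtype

/-- `G = PSL(2,ℂ) = SL(2,ℂ)/{±I}`, with the quotient topology. -/
abbrev PSL2C := Matrix.ProjectiveSpecialLinearGroup (Fin 2) ℂ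

/-- The projection `π : SL(2,ℂ) → PSL(2,ℂ)`. -/
def pr : SL2C →* PSL2C := QuotientGroup.mk' _

/-- The upper triangular unipotent matrix `[[1, t],[0, 1]]` as an element of `SL(2,ℂ)`. -/
def uMat (t : ℂ) : SL2C := ⟨!![1, t; 0, 1], by simp [Matrix.det_fin_two_of]⟩

/-- `u_t = π [[1, t],[0, 1]]` for `t ∈ ℝ`. -/
def uu (t : ℝ) : PSL2C := pr (uMat t)

/-- `v_s = π [[1, is],[0, 1]]` for `s ∈ ℝ`. -/
def vv (s : ℝ) : PSL2C := pr (uMat (s * Complex.I))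

/-- The subgroup `U = {u_t : t ∈ ℝ}` as a subset of `PSL(2,ℂ)`. -/
def Uset : Set PSL2C := Set.range uu

/-- The subgroup `V = {v_s : s ∈ ℝ}` as a subset of `PSL(2,ℂ)`. -/
def Vset : Set PSL2C := Set.range vv

/-- The subgroup `N = {π [[1, z],[0,1]] : z ∈ ℂ}` as a subset of `PSL(2,ℂ)`. -/
def Nset : Set PSL2C := {x | ∃ z : ℂ, x = pr (uMat z)}

/-- `H = π (SL(2,ℝ))`, the image in `PSL(2,ℂ)` of the real matrices. -/
def Hset : Set PSL2C :=
  {x | ∃ g : Matrix.SpecialLinearGroup (Fin 2) ℝ,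
    x = pr (Matrix.SpecialLinearGroup.map (algebraMap ℝ ℂ) g)}

/-- The upper triangular matrix `[[a, z],[0, a⁻¹]]` as an element of `SL(2,ℂ)`,
for a nonzero real `a`. -/
def tri (a : ℝ) (ha : a ≠ 0) (z : ℂ) : SL2C :=
  ⟨!![(a : ℂ), z; 0, (a : ℂ)⁻¹], by
    have h : (a : ℂ) ≠ 0 := by exact_mod_cast ha
    simp [Matrix.det_fin_two_of, mul_inv_cancel₀ h]⟩

/-- `AN = {π [[a, z],[0, a⁻¹]] : a > 0 real, z ∈ ℂ}`. -/
def ANset : Set PSL2C := {x | ∃ (a : ℝ) (ha : 0 < a) (z : ℂ), x = pr (tri a ha.ne' z)}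

/-- `AV = {π [[a, ib],[0, a⁻¹]] : a > 0 real, b ∈ ℝ}`. -/
def AVset : Set PSL2C :=
  {x | ∃ (a : ℝ) (ha : 0 < a) (b : ℝ), x = pr (tri a ha.ne' (b * Complex.I))}

/-- `A = {π diag(a, a⁻¹) : a > 0 real}`. -/
def Aset : Set PSL2C := {x | ∃ (a : ℝ) (ha : 0 < a), x = pr (tri a ha.ne' 0)}

variable (Γ : Subgroup PSL2C)

/-- The space `Γ\\G` of right cosets `Γg`, with the quotient topology. -/
abbrev XΓ := Quotient (QuotientGroup.rightRel Γ)

/-- The natural projection `G → Γ\\G`. -/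
def mkX (g : PSL2C) : XΓ Γ := Quotient.mk'' g

/-- The right translation action of `G` on `Γ\\G`: `(Γg₀)·g = Γ(g₀g)`. -/
def act (x : XΓ Γ) (g : PSL2C) : XΓ Γ :=
  Quotient.map' (fun h => h * g)
    (fun a b hab => by
      rw [QuotientGroup.rightRel_apply] at hab ⊢
      simpa [_root_.mul_inv_rev, mul_assoc] using hab) x

/-- The orbit `xS = {x·s : s ∈ S}` of a point `x ∈ Γ\\G` under a subset `S ⊆ G`. -/
def orb (x : XΓ Γ) (S : Set PSL2C) : Set (XΓ Γ) := (fun s => act Γ x s) '' S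

/-- `Γ` is a lattice in `G`: there is a nonzero finite Borel measure on `Γ\\G`
invariant under the right translation action of `G`. -/
def IsLattice : Prop :=
  letI : MeasurableSpace (XΓ Γ) := borel _
  ∃ μ : MeasureTheory.Measure (XΓ Γ), μ ≠ 0 ∧ MeasureTheory.IsFiniteMeasure μ ∧
    ∀ g : PSL2C, MeasureTheory.Measure.map (fun x => act Γ x g) μ = μ


/-- `S ⊆ PSL(2,ℂ)` is a one-parameter semigroup of `V` if
`S = {v_{tb} : t ≥ 0}` for some `b ≠ 0`. -/
def IsOneParSemigroupV (S : Set PSL2C) : Prop :=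
  ∃ b : ℝ, b ≠ 0 ∧ S = {x | ∃ t : ℝ, 0 ≤ t ∧ x = vv (t * b)}


/-- The topological `limsup` of a sequence of subsets of a topological space:
the set of points `x` such that every neighborhood of `x` meets `Q n` for
infinitely many `n`. -/
def seqLimsup {α : Type*} [TopologicalSpace α] (Q : ℕ → Set α) : Set α :=
  {x | ∀ O ∈ nhds x, {n | (O ∩ Q n).Nonempty}.Infinite}



/-- Entrywise complex conjugation. -/
def cj : SL2C →* SL2C := Matrix.SpecialLinearGroup.map (starRingEnd ℂ)

/-- `g * conj(g)⁻¹`, a complete invariant of `gSL(2,ℝ)`. -/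
def XX (g : SL2C) : SL2C := g * (cj g)⁻¹

lemma cj_apply (g : SL2C) (i j : Fin 2) : cj g i j = (starRingEnd ℂ) (g i j) := rfl

instance instTGSL2C : IsTopologicalGroup SL2C :=
  Matrix.SpecialLinearGroup.topologicalGroup

lemma uMat_coe (z : ℂ) : (uMat z : Matrix (Fin 2) (Fin 2) ℂ) = !![1, z; 0, 1] := rfl

lemma cj_cj (g : SL2C) : cj (cj g) = g := by
  ext i j
  simp [cj_apply]

lemma XX_mul (w g : SL2C) : XX (w * g) = w * XX g * (cj w)⁻¹ := by
  simp [XX, mul_assoc]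

lemma cj_uMat (z : ℂ) : cj (uMat z) = uMat ((starRingEnd ℂ) z) := by
  ext i j
  fin_cases i <;> fin_cases j <;> simp [cj_apply, uMat_coe]

lemma uMat_mul (z w : ℂ) : uMat z * uMat w = uMat (z + w) := by
  ext i j
  fin_cases i <;> fin_cases j <;> simp [uMat_coe, Matrix.mul_apply, Fin.sum_univ_two, add_comm]

lemma uMat_zero : uMat 0 = 1 := by
  ext i j
  fin_cases i <;> fin_cases j <;> simp [uMat]

lemma uMat_inv (z : ℂ) : (uMat z)⁻¹ = uMat (-z) := by
  rw [inv_eq_iff_mul_eq_one, uMat_mul]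
  simp [uMat_zero]

lemma XX_00 (g : SL2C) : XX g 0 0 = g 0 0 * (starRingEnd ℂ) (g 1 1) - g 0 1 * (starRingEnd ℂ) (g 1 0) := by
  simp [XX, Matrix.SpecialLinearGroup.coe_inv, Matrix.adjugate_fin_two, Matrix.mul_apply,
    Fin.sum_univ_two, cj_apply]
  ring

lemma XX_01 (g : SL2C) : XX g 0 1 = -(g 0 0 * (starRingEnd ℂ) (g 0 1)) + g 0 1 * (starRingEnd ℂ) (g 0 0) := by
  simp [XX, Matrix.SpecialLinearGroup.coe_inv, Matrix.adjugate_fin_two, Matrix.mul_apply,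
    Fin.sum_univ_two, cj_apply]

lemma XX_10 (g : SL2C) : XX g 1 0 = g 1 0 * (starRingEnd ℂ) (g 1 1) - g 1 1 * (starRingEnd ℂ) (g 1 0) := by
  simp [XX, Matrix.SpecialLinearGroup.coe_inv, Matrix.adjugate_fin_two, Matrix.mul_apply,
    Fin.sum_univ_two, cj_apply]
  ring

lemma XX_11 (g : SL2C) : XX g 1 1 = -(g 1 0 * (starRingEnd ℂ) (g 0 1)) + g 1 1 * (starRingEnd ℂ) (g 0 0) := by
  simp [XX, Matrix.SpecialLinearGroup.coe_inv, Matrix.adjugate_fin_two, Matrix.mul_apply,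
    Fin.sum_univ_two, cj_apply]

lemma XX_01_re (g : SL2C) : (XX g 0 1).re = 0 := by
  rw [XX_01]; simp; ring

lemma XX_10_re (g : SL2C) : (XX g 1 0).re = 0 := by
  rw [XX_10]; simp; ring

lemma XX_11_eq (g : SL2C) : XX g 1 1 = (starRingEnd ℂ) (XX g 0 0) := by
  rw [XX_11, XX_00]; simp; ring

lemma XX_01_eq (g : SL2C) : XX g 0 1 = (XX g 0 1).im * Complex.I := by
  apply Complex.ext <;> simp [XX_01_re]

lemma XX_10_eq (g : SL2C) : XX g 1 0 = (XX g 1 0).im * Complex.I := by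
  apply Complex.ext <;> simp [XX_10_re]

lemma mem_Hset_of_real {k : SL2C} (hk : cj k = k) : pr k ∈ Hset := by
  have him : ∀ i j, (((k i j).re : ℝ) : ℂ) = k i j := by
    intro i j
    have h := congrArg (fun m : SL2C => m i j) hk
    simp only [cj_apply] at h
    exact Complex.conj_eq_iff_re.mp h
  have hd := k.det_coe
  rw [Matrix.det_fin_two] at hd
  refine ⟨⟨!![(k 0 0).re, (k 0 1).re; (k 1 0).re, (k 1 1).re], ?_⟩, ?_⟩
  · rw [Matrix.det_fin_two_of]
    rw [← him 0 0, ← him 0 1, ← him 1 0, ← him 1 1] at hd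
    exact_mod_cast hd
  · congr 1
    ext i j
    fin_cases i <;> fin_cases j <;> exact (him _ _).symm

lemma continuous_cj : Continuous cj := by
  refine Continuous.subtype_mk (f := fun g : SL2C => (starRingEnd ℂ).mapMatrix (g : Matrix (Fin 2) (Fin 2) ℂ)) ?_ _
  refine continuous_matrix fun i j => ?_
  simp only [RingHom.mapMatrix_apply, Matrix.map_apply]
  exact Complex.continuous_conj.comp ((continuous_subtype_val (p := fun A : Matrix (Fin 2) (Fin 2) ℂ => A.det = 1)).matrix_elem i j)

lemma continuous_XX : Continuous XX := by
  unfold XX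
  exact continuous_id.mul continuous_cj.inv

lemma continuous_pr : Continuous pr := continuous_quot_mk

lemma isOpenMap_pr : IsOpenMap pr := QuotientGroup.isOpenMap_coe

lemma XX_eq_of_pr {g k : SL2C} (h : pr g = pr k) : XX g = XX k := by
  have h2 : g⁻¹ * k ∈ Subgroup.center SL2C := QuotientGroup.eq.mp h
  obtain ⟨r, hr, hr2⟩ := Matrix.SpecialLinearGroup.mem_center_iff.mp h2
  have hk : k = g * (g⁻¹ * k) := by group
  set z := g⁻¹ * k with hz
  have hcz : cj z = z := by
    simp only [Fintype.card_fin] at hr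
    have h3 : r = 1 ∨ r = -1 := by simpa using hr
    ext i j
    rw [cj_apply, ← hr2]
    rcases h3 with rfl | rfl <;> fin_cases i <;> fin_cases j <;> simp
  rw [hk, XX, XX, map_mul, hcz]
  simp

lemma tendsto_XX {g : ℕ → PSL2C} (hconv : Tendsto g atTop (nhds 1)) {k : ℕ → SL2C}
    (hk : ∀ n, pr (k n) = g n) : Tendsto (fun n => XX (k n)) atTop (nhds 1) := by
  intro W hW
  have h1 : XX 1 = 1 := by simp [XX]
  have h2 : Set.preimage XX W ∈ nhds (1 : SL2C) := continuous_XX.continuousAt.preimage_mem_nhds (by rwa [h1])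
  have h3 : Set.image pr (Set.preimage XX W) ∈ nhds (1 : PSL2C) := by
    have := isOpenMap_pr.image_mem_nhds h2
    rwa [map_one] at this
  change ∀ᶠ n in atTop, XX (k n) ∈ W
  have h4 : ∀ᶠ n in atTop, g n ∈ Set.image pr (Set.preimage XX W) := hconv h3
  filter_upwards [h4] with n hn
  obtain ⟨m, hm, hmn⟩ := hn
  rw [← XX_eq_of_pr (hmn.trans (hk n).symm)]
  exact hm

/-- Local section. -/
lemma local_section {O : Set SL2C} (hO : O ∈ nhds 1) :
    ∀ᶠ Y in nhds (1 : SL2C), ∀ g, XX g = Y → ∃ k ∈ O, cj (g⁻¹ * k) = g⁻¹ * k := by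
  obtain ⟨W, hW, hWO⟩ := mem_nhds_subtype _ _ _ |>.mp hO
  let M : SL2C → Matrix (Fin 2) (Fin 2) ℂ := fun Y =>
    (((Real.sqrt (2 + 2 * (Y 0 0).re))⁻¹ : ℝ) : ℂ) • (1 + (Y : Matrix (Fin 2) (Fin 2) ℂ))
  have hval : Continuous (fun Y : SL2C => (Y : Matrix (Fin 2) (Fin 2) ℂ)) := continuous_subtype_val
  have h00 : Continuous (fun Y : SL2C => 2 + 2 * (Y 0 0).re) := by
    have := Complex.continuous_re.comp (hval.matrix_elem 0 0)
    exact continuous_const.add (continuous_const.mul this)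
  have hs4 : Real.sqrt 4 = 2 := by
    rw [show (4:ℝ) = 2 ^ 2 by norm_num]; simp
  have hM : ContinuousAt M 1 := by
    refine ContinuousAt.smul (f := fun Y : SL2C => (((Real.sqrt (2 + 2 * (Y 0 0).re))⁻¹ : ℝ) : ℂ))
      (g := fun Y : SL2C => 1 + (Y : Matrix (Fin 2) (Fin 2) ℂ)) ?_ ?_
    · apply Complex.continuous_ofReal.continuousAt.comp
      apply ContinuousAt.inv₀
      · exact (Real.continuous_sqrt.comp h00).continuousAt
      · simp
    · exact (continuous_const.add hval).continuousAt
  have hM1 : M 1 = 1 := by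
    ext i j
    fin_cases i <;> fin_cases j <;> simp [M] <;> norm_num [hs4]
  have e1 : ∀ᶠ Y in nhds (1 : SL2C), M Y ∈ W := hM (by rw [hM1]; exact hW)
  have e2 : ∀ᶠ Y in nhds (1 : SL2C), 0 < 2 + 2 * (Y 0 0).re :=
    h00.continuousAt.eventually (lt_mem_nhds (by simp))
  filter_upwards [e1, e2] with Y h1 h2 g hg
  set l : ℝ := (Real.sqrt (2 + 2 * (Y 0 0).re))⁻¹ with hl
  have hl2 : l ^ 2 * (2 + 2 * (Y 0 0).re) = 1 := by
    rw [hl, inv_pow, Real.sq_sqrt h2.le, inv_mul_cancel₀ h2.ne']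
  have h11 : Y 1 1 = (starRingEnd ℂ) (Y 0 0) := by rw [← hg]; exact XX_11_eq g
  have hdY := Y.det_coe
  rw [Matrix.det_fin_two] at hdY
  have htr : Y 0 0 + Y 1 1 = ((2 * (Y 0 0).re : ℝ) : ℂ) := by
    rw [h11, Complex.add_conj]
  have hdet : (M Y).det = 1 := by
    have hl2' : (l : ℂ) ^ 2 * (2 + ((2 * (Y 0 0).re : ℝ) : ℂ)) = 1 := by exact_mod_cast hl2
    rw [← htr] at hl2'
    rw [Matrix.det_fin_two]
    simp [M]
    simp only [← Complex.ofReal_inv]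
    rw [← hl]
    linear_combination hl2' + (l:ℂ)^2 * hdY
  refine ⟨⟨M Y, hdet⟩, hWO h1, ?_⟩
  set k : SL2C := ⟨M Y, hdet⟩ with hk
  have hcY : cj Y = Y⁻¹ := by
    rw [← hg]; simp [XX, cj_cj]
  have hck : cj k = Y⁻¹ * k := by
    have hA : (cj k : Matrix (Fin 2) (Fin 2) ℂ) = (l : ℂ) • (1 + (cj Y : Matrix (Fin 2) (Fin 2) ℂ)) := by
      ext i j
      have : cj k i j = (starRingEnd ℂ) (M Y i j) := rfl
      rw [this]
      fin_cases i <;> fin_cases j <;> simp [M, cj_apply, hl, mul_add]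
    apply Subtype.ext
    rw [hA, hcY, Matrix.SpecialLinearGroup.coe_mul]
    change _ = _ * ((l : ℂ) • (1 + (Y : Matrix (Fin 2) (Fin 2) ℂ)))
    rw [Matrix.mul_smul, mul_add, ← Matrix.SpecialLinearGroup.coe_mul, inv_mul_cancel, mul_one,
      add_comm]
    simp
  rw [map_mul, hck, map_inv, ← hg, XX]
  group

lemma mem_VH {k : SL2C} (h10 : (XX k 1 0).im = 0) (h00 : (XX k 0 0).im = 0)
    (hpos : 0 < (XX k 0 0).re) : ∃ v ∈ Vset, ∃ h ∈ Hset, pr k = v * h := by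
  have hd := (XX k).det_coe
  rw [Matrix.det_fin_two, XX_11_eq, XX_10_eq, h10] at hd
  have hp : XX k 0 0 = ((XX k 0 0).re : ℝ) := by
    apply Complex.ext <;> simp [h00]
  rw [hp] at hd
  simp only [Complex.conj_ofReal, Complex.ofReal_zero, zero_mul, mul_zero, sub_zero] at hd
  have hd' : (XX k 0 0).re * (XX k 0 0).re = 1 := by exact_mod_cast hd
  have hre : (XX k 0 0).re = 1 := by nlinarith
  set β := (XX k 0 1).im with hβ
  have hX : XX k = uMat (β * Complex.I) := by
    ext i j
    fin_cases i <;> fin_cases j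
    · simpa [uMat, hre] using hp
    · simpa [uMat] using XX_01_eq k
    · simpa [uMat, h10] using XX_10_eq k
    · have := XX_11_eq k
      rw [hp, hre] at this
      simpa [uMat] using this
  refine ⟨vv (β / 2), ⟨_, rfl⟩, pr ((uMat ((β / 2 : ℝ) * Complex.I))⁻¹ * k), ?_, ?_⟩
  · apply mem_Hset_of_real
    have h1 : XX ((uMat ((β / 2 : ℝ) * Complex.I))⁻¹ * k) = 1 := by
      rw [XX_mul, hX, uMat_inv, cj_uMat, uMat_inv, uMat_mul, uMat_mul, ← uMat_zero]
      congr 1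
      simp only [map_neg, map_mul, Complex.conj_ofReal, Complex.conj_I]
      push_cast
      ring
    rw [XX, mul_inv_eq_one] at h1
    exact h1.symm
  · rw [vv, ← map_mul]; simp

lemma exists_root {s q c : ℝ} (hs : 0 ≤ s) (hq : 0 ≤ q) (hc : 0 ≤ c) (h : ¬ (q = 0 ∧ c = 0)) :
    ∃ τ : ℝ, 0 ≤ τ ∧ 2 * τ * q + τ ^ 2 * c = 2 * s := by
  rcases hs.eq_or_lt with rfl | hs
  · exact ⟨0, le_rfl, by simp⟩
  set r := Real.sqrt (q ^ 2 + 2 * s * c) with hr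
  have hr2 : r ^ 2 = q ^ 2 + 2 * s * c := Real.sq_sqrt (by positivity)
  have hr0 : 0 ≤ r := Real.sqrt_nonneg _
  have hpos : 0 < q + r := by
    rcases hq.eq_or_lt with rfl | hq
    · have : 0 < c := lt_of_le_of_ne hc (fun h' => h ⟨rfl, h'.symm⟩)
      have : 0 < r := Real.sqrt_pos.mpr (by positivity)
      linarith
    · linarith
  refine ⟨2 * s / (q + r), by positivity, ?_⟩
  field_simp
  linear_combination (-1) * hr2

lemma exists_t {s q γ σ : ℝ} (hs : 0 ≤ s) (hσ : σ = 1 ∨ σ = -1) (hc : σ * γ ≤ 0)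
    (h : ¬ (q = 0 ∧ γ = 0)) :
    ∃ t : ℝ, - 2 * t * q - t ^ 2 * γ = 2 * (σ * s) ∧ (t * γ) ^ 2 ≤ 2 * s * |γ| := by
  obtain ⟨τ, hτ, he⟩ := exists_root hs (abs_nonneg q) (abs_nonneg γ) (by simpa using h)
  have hγ : |γ| = - σ * γ := by
    rcases hσ with rfl | rfl
    · rw [abs_of_nonpos (by linarith)]; ring
    · rw [abs_of_nonneg (by linarith)]; ring
  have hb : (τ * γ) ^ 2 ≤ 2 * s * |γ| := by
    have : (τ * γ) ^ 2 = τ ^ 2 * |γ| * |γ| := by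
      rw [mul_pow, ← sq_abs γ]; ring
    rw [this]
    apply mul_le_mul_of_nonneg_right _ (abs_nonneg _)
    have : 0 ≤ 2 * τ * |q| := by positivity
    linarith
  have hσ2 : σ * σ = 1 := by rcases hσ with rfl | rfl <;> norm_num
  rcases abs_cases q with ⟨hq, _⟩ | ⟨hq, _⟩
  · refine ⟨-σ * τ, ?_, ?_⟩
    · rw [hq, hγ] at he
      linear_combination σ * he
    · have : (-σ * τ * γ) ^ 2 = (τ * γ) ^ 2 := by linear_combination (τ * γ) ^ 2 * hσ2
      rw [this]; exact hb
  · refine ⟨σ * τ, ?_, ?_⟩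
    · rw [hq, hγ] at he
      linear_combination σ * he
    · have : (σ * τ * γ) ^ 2 = (τ * γ) ^ 2 := by linear_combination (τ * γ) ^ 2 * hσ2
      rw [this]; exact hb

lemma conj_entries (k : SL2C) (t : ℝ) (Z : SL2C) (hZ : Z = XX (uMat t * k)) :
    Z 0 0 = XX k 0 0 + (t * (XX k 1 0).im : ℝ) * Complex.I ∧
    Z 0 1 = ((XX k 0 1).im + (- 2 * t * (XX k 0 0).im - t ^ 2 * (XX k 1 0).im) : ℝ) * Complex.I ∧
    Z 1 0 = ((XX k 1 0).im : ℝ) * Complex.I ∧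
    Z 1 1 = XX k 1 1 - (t * (XX k 1 0).im : ℝ) * Complex.I := by
  have h := XX_mul (uMat t) k
  rw [cj_uMat, Complex.conj_ofReal, uMat_inv] at h
  rw [hZ, h]
  have e01 := XX_01_eq k
  have e10 := XX_10_eq k
  have e11 := XX_11_eq k
  have hp : (starRingEnd ℂ) (XX k 0 0) = XX k 0 0 - 2 * (XX k 0 0).im * Complex.I := by
    apply Complex.ext <;> simp
    ring
  rw [hp] at e11
  refine ⟨?_, ?_, ?_, ?_⟩
  · simp [uMat_coe, Matrix.mul_apply, Matrix.vecMul, dotProduct, Fin.sum_univ_two]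
    linear_combination t * e10
  · simp [uMat_coe, Matrix.mul_apply, Matrix.vecMul, dotProduct, Fin.sum_univ_two]
    linear_combination e01 + t * e11 - t ^ 2 * e10
  · simp [uMat_coe, Matrix.mul_apply, Matrix.vecMul, dotProduct, Fin.sum_univ_two]
    linear_combination e10
  · simp [uMat_coe, Matrix.mul_apply, Matrix.vecMul, dotProduct, Fin.sum_univ_two]
    linear_combination - t * e10

/-- Convergence in `SL(2,ℂ)` is entrywise. -/
lemma tendsto_SL {ι : Type*} {l : Filter ι} {f : ι → SL2C} {a : SL2C}
    (h : ∀ i j, Tendsto (fun n => f n i j) l (nhds (a i j))) : Tendsto f l (nhds a) := by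
  refine tendsto_subtype_rng.mpr ?_
  exact tendsto_pi_nhds.mpr fun i => tendsto_pi_nhds.mpr fun j => h i j

lemma main_aux {g : ℕ → PSL2C} {k : ℕ → SL2C} (hk : ∀ n, pr (k n) = g n)
    (hX : Tendsto (fun n => XX (k n)) atTop (nhds 1))
    (hne : ∀ᶠ n in atTop, ¬ ((XX (k n) 0 0).im = 0 ∧ (XX (k n) 1 0).im = 0))
    {σ : ℝ} (hσ : σ = 1 ∨ σ = -1)
    (hfreq : ∃ᶠ n in atTop, σ * (XX (k n) 1 0).im ≤ 0) {s : ℝ} (hs : 0 ≤ s) :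
    vv (s * σ) ∈ seqLimsup (fun n => {x | ∃ t : ℝ, ∃ h ∈ Hset, x = uu t * g n * h}) := by
  intro O hO
  rw [← Nat.frequently_atTop_iff_infinite]
  let P : ℕ → ℝ → Prop := fun n t =>
    - 2 * t * (XX (k n) 0 0).im - t ^ 2 * (XX (k n) 1 0).im = 2 * (σ * s) ∧
      (t * (XX (k n) 1 0).im) ^ 2 ≤ 2 * s * |(XX (k n) 1 0).im|
  have hfreq2 : ∃ᶠ n in atTop, ∃ t, P n t :=
    (hfreq.and_eventually hne).mono fun n hn => exists_t hs hσ hn.1 hn.2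
  let N : Set ℕ := {n | ∃ t, P n t}
  let l : Filter ℕ := atTop ⊓ Filter.principal N
  have hlN : ∀ᶠ n in l, n ∈ N := mem_inf_of_right (mem_principal_self N)
  suffices hsuff : ∀ᶠ n in l, (O ∩ {x | ∃ t : ℝ, ∃ h ∈ Hset, x = uu t * g n * h}).Nonempty by
    have h1 := eventually_inf_principal.mp hsuff
    exact (hfreq2.and_eventually h1).mono fun n hn => hn.2 hn.1
  choose! t ht using (fun n (hn : n ∈ N) => hn)
  have hXl : Tendsto (fun n => XX (k n)) l (nhds 1) := hX.mono_left inf_le_left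
  have hent : ∀ i j, Tendsto (fun n => XX (k n) i j) l (nhds ((1 : SL2C) i j)) := by
    intro i j
    have hc : Continuous (fun Y : SL2C => Y i j) :=
      Continuous.matrix_elem (continuous_subtype_val (p := fun A : Matrix (Fin 2) (Fin 2) ℂ => A.det = 1)) i j
    exact (hc.tendsto 1).comp hXl
  have him : ∀ i j, Tendsto (fun n => (XX (k n) i j).im) l (nhds ((1 : SL2C) i j).im) := by
    intro i j
    exact (Complex.continuous_im.tendsto _).comp (hent i j)
  have hγ : Tendsto (fun n => (XX (k n) 1 0).im) l (nhds 0) := by simpa using him 1 0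
  have hβ : Tendsto (fun n => (XX (k n) 0 1).im) l (nhds 0) := by simpa using him 0 1
  have htγ : Tendsto (fun n => t n * (XX (k n) 1 0).im) l (nhds 0) := by
    have h1 : Tendsto (fun n => Real.sqrt (2 * s * |(XX (k n) 1 0).im|)) l (nhds 0) := by
      have := (Real.continuous_sqrt.tendsto _).comp (hγ.abs.const_mul (2 * s))
      rw [abs_zero, mul_zero, Real.sqrt_zero] at this
      exact this
    refine squeeze_zero_norm' ?_ h1
    filter_upwards [hlN] with n hn
    exact Real.abs_le_sqrt (ht n hn).2
  have hIc : ∀ {f : ℕ → ℝ} {a : ℝ}, Tendsto f l (nhds a) →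
      Tendsto (fun n => (f n : ℂ) * Complex.I) l (nhds (a * Complex.I)) := by
    intro f a hf
    exact ((Complex.continuous_ofReal.tendsto _).comp hf).mul_const _
  have hZ : Tendsto (fun n => XX (uMat (t n) * k n)) l (nhds (uMat ((2 * (σ * s) : ℝ) * Complex.I))) := by
    apply tendsto_SL
    have hce := fun n => conj_entries (k n) (t n) _ rfl
    intro i j
    fin_cases i <;> fin_cases j
    · have := (hent 0 0).add (hIc htγ)
      simp only [← (hce _).1] at this
      simpa [uMat] using this
    · have := hIc (hβ.add_const (2 * (σ * s)))
      rw [zero_add] at this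
      have h2 : (fun n => XX (uMat (t n) * k n) 0 1) =ᶠ[l]
          fun n => (((XX (k n) 0 1).im + 2 * (σ * s) : ℝ) : ℂ) * Complex.I := by
        filter_upwards [hlN] with n hn
        rw [(hce n).2.1, (ht n hn).1]
      exact this.congr' h2.symm
    · have := hIc hγ
      simp only [← (hce _).2.2.1] at this
      simpa [uMat] using this
    · have := (hent 1 1).sub (hIc htγ)
      simp only [← (hce _).2.2.2] at this
      simpa [uMat] using this
  set v : SL2C := uMat ((s * σ : ℝ) * Complex.I) with hv
  have hY : Tendsto (fun n => XX (v⁻¹ * (uMat (t n) * k n))) l (nhds 1) := by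
    have h1 := (hZ.const_mul v⁻¹).mul_const (cj v⁻¹)⁻¹
    simp only [← XX_mul] at h1
    convert h1 using 2
    rw [hv, uMat_inv, cj_uMat, uMat_inv, uMat_mul, uMat_mul, ← uMat_zero]
    congr 1
    simp
    ring
  have hO' : Set.preimage (fun m : SL2C => pr (v * m)) O ∈ nhds (1 : SL2C) := by
    have hc : Continuous (fun m : SL2C => pr (v * m)) := continuous_pr.comp (continuous_const.mul continuous_id)
    apply hc.continuousAt.preimage_mem_nhds
    rw [mul_one]
    exact hO
  filter_upwards [hY.eventually (local_section hO')] with n hn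
  obtain ⟨m, hm, hreal⟩ := hn _ rfl
  refine ⟨pr (v * m), hm, t n, _, mem_Hset_of_real hreal, ?_⟩
  rw [uu, ← hk n, ← map_mul, ← map_mul]
  congr 1
  group

/-- Unipotent blowup: if `g_n → e` in `G = PSL(2,ℂ)` with `g_n ∉ VH`, then
`limsup_n U g_n H` contains a one-parameter semigroup of `V`. -/
theorem unipotent_blowup_VH
    (g : ℕ → PSL2C) (hconv : Tendsto g atTop (nhds 1))
    (hg : ∀ n, g n ∉ {x | ∃ v ∈ Vset, ∃ h ∈ Hset, x = v * h}) :
    ∃ S : Set PSL2C, IsOneParSemigroupV S ∧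
      S ⊆ seqLimsup (fun n => {x | ∃ t : ℝ, ∃ h ∈ Hset, x = uu t * g n * h}) := by
  choose k hk using fun n => QuotientGroup.mk'_surjective _ (g n)
  change ∀ n, pr (k n) = g n at hk
  have hX := tendsto_XX hconv hk
  have hre : Tendsto (fun n => (XX (k n) 0 0).re) atTop (nhds 1) := by
    have hc : Continuous (fun Y : SL2C => (Y 0 0).re) :=
      Complex.continuous_re.comp (Continuous.matrix_elem
        (continuous_subtype_val (p := fun A : Matrix (Fin 2) (Fin 2) ℂ => A.det = 1)) 0 0)
    have := (hc.tendsto 1).comp hX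
    rw [Matrix.SpecialLinearGroup.coe_one, Matrix.one_apply_eq, Complex.one_re] at this
    exact this
  have hne : ∀ᶠ n in atTop, ¬ ((XX (k n) 0 0).im = 0 ∧ (XX (k n) 1 0).im = 0) := by
    filter_upwards [hre.eventually (lt_mem_nhds one_pos)] with n hn h
    apply hg n
    rw [← hk n]
    exact mem_VH h.2 h.1 hn
  have hσ : ∃ σ : ℝ, (σ = 1 ∨ σ = -1) ∧ ∃ᶠ n in atTop, σ * (XX (k n) 1 0).im ≤ 0 := by
    by_cases h : ∃ᶠ n in atTop, (1 : ℝ) * (XX (k n) 1 0).im ≤ 0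
    · exact ⟨1, Or.inl rfl, h⟩
    · refine ⟨-1, Or.inr rfl, ?_⟩
      rw [not_frequently] at h
      refine Eventually.frequently (h.mono fun n hn => ?_)
      linarith
  obtain ⟨σ, hσ, hfreq⟩ := hσ
  refine ⟨{x | ∃ t : ℝ, 0 ≤ t ∧ x = vv (t * σ)}, ⟨σ, ?_, rfl⟩, ?_⟩
  · rcases hσ with rfl | rfl <;> norm_num
  · rintro x ⟨s, hs, rfl⟩
    exact main_aux hk hX hne hσ hfreq hs


end
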